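/- Fix ω ∈ ℝ and γ₁, γ₂ > 0. There exists a constant C > 0, depending only on ω, γ₁ and γ₂ (and in particular independent of T), such that for every T > 0 and every classical solution (v¹, v², ξ₁, ξ₂, ξ₃) of the forward coupled observer system on [0,T] with v¹, v² of class C³, one has: (1/2)·( ∫₀¹ |∂ₜv²(T,x)|² dx + ∫₀¹ |∂ₓv²(T,x)|² dx + γ₁ω⁴·ξ₁(T)² ) + (1/4)·γ₁·|∂ₓv¹(T,0)|² + (1/2)·γ₁γ₂ω²·∫₀ᵀ ξ₂(s)² ds + γ₁ω²·ξ₂(T)² ≤ C·( ∫₀¹ (|v¹(0,x)|² + |∂ₓv¹(0,x)|² + |∂ₓₓv¹(0,x)|²) dx + ∫₀¹ (|v²(0,x)|² + |∂ₓv²(0,x)|²) dx + ξ₁(0)² + ξ₂(0)² ). (This is the second energy estimate of Proposition 3, with the H²(0,1) norm of v¹(0,·) and the H¹(0,1) norm of v²(0,·) on the right-hand side.) -/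

import Mathlib

open Set Filter MeasureTheory intervalIntegral

/-- A classical solution of the forward coupled observer system on `[0,T]`:
`∂ₜv¹ = v²`, `∂ₜv² = ∂ₓₓv¹` on `[0,T] × [0,1]`, boundary conditions `v¹(t,1) = 0`,
`v¹(t,0) = γ₁ξ₁(t) + γ₁γ₂ξ₃(t)`, and the observer ODEs `ξ₁' = ξ₂ − γ₂ξ₁`,
`ξ₂' = −ω²ξ₁ + ∂ₓv¹(·,0)`, `ξ₃' = ξ₁` on `[0,T]`. -/
structure FwdObserverSol (T ω γ₁ γ₂ : ℝ) where
  v1 : ℝ → ℝ → ℝ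
  v2 : ℝ → ℝ → ℝ
  ξ1 : ℝ → ℝ
  ξ2 : ℝ → ℝ
  ξ3 : ℝ → ℝ
  smooth_v1 : ContDiff ℝ 2 (Function.uncurry v1)
  smooth_v2 : ContDiff ℝ 2 (Function.uncurry v2)
  smooth_ξ1 : ContDiff ℝ 1 ξ1
  smooth_ξ2 : ContDiff ℝ 1 ξ2
  smooth_ξ3 : ContDiff ℝ 1 ξ3
  pde1 : ∀ t ∈ Icc (0:ℝ) T, ∀ x ∈ Icc (0:ℝ) 1, deriv (fun s => v1 s x) t = v2 t x
  pde2 : ∀ t ∈ Icc (0:ℝ) T, ∀ x ∈ Icc (0:ℝ) 1,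
    deriv (fun s => v2 s x) t = deriv (deriv (fun y => v1 t y)) x
  bc1 : ∀ t ∈ Icc (0:ℝ) T, v1 t 1 = 0
  bc0 : ∀ t ∈ Icc (0:ℝ) T, v1 t 0 = γ₁ * ξ1 t + γ₁ * γ₂ * ξ3 t
  ode1 : ∀ t ∈ Icc (0:ℝ) T, deriv ξ1 t = ξ2 t - γ₂ * ξ1 t
  ode2 : ∀ t ∈ Icc (0:ℝ) T, deriv ξ2 t = -ω ^ 2 * ξ1 t + deriv (fun y => v1 t y) 0
  ode3 : ∀ t ∈ Icc (0:ℝ) T, deriv ξ3 t = ξ1 t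

open scoped Topology

/-- The partial derivative of `f t x` in the first (time) variable. -/
noncomputable def partialT (f : ℝ → ℝ → ℝ) (t x : ℝ) : ℝ := deriv (fun s => f s x) t

/-- The partial derivative of `f t x` in the second (space) variable. -/
noncomputable def partialX (f : ℝ → ℝ → ℝ) (t x : ℝ) : ℝ := deriv (fun y => f t y) x

theorem hasDerivAt_fderiv_fst {f : ℝ → ℝ → ℝ} (hf : Differentiable ℝ (Function.uncurry f))
    (t x : ℝ) :
    HasDerivAt (fun s => f s x) (fderiv ℝ (Function.uncurry f) (t, x) (1, 0)) t :=
  (hf (t, x)).hasFDerivAt.comp_hasDerivAt (f := fun s : ℝ => (s, x)) t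
    ((hasDerivAt_id t).prodMk (hasDerivAt_const t x))

theorem hasDerivAt_fderiv_snd {f : ℝ → ℝ → ℝ} (hf : Differentiable ℝ (Function.uncurry f))
    (t x : ℝ) :
    HasDerivAt (fun y => f t y) (fderiv ℝ (Function.uncurry f) (t, x) (0, 1)) x :=
  (hf (t, x)).hasFDerivAt.comp_hasDerivAt (f := fun y : ℝ => (t, y)) x
    ((hasDerivAt_const x t).prodMk (hasDerivAt_id x))

theorem hasDerivAt_partialT {f : ℝ → ℝ → ℝ} (hf : Differentiable ℝ (Function.uncurry f))
    (t x : ℝ) : HasDerivAt (fun s => f s x) (partialT f t x) t :=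
  (hasDerivAt_fderiv_fst hf t x).differentiableAt.hasDerivAt

theorem hasDerivAt_partialX {f : ℝ → ℝ → ℝ} (hf : Differentiable ℝ (Function.uncurry f))
    (t x : ℝ) : HasDerivAt (fun y => f t y) (partialX f t x) x :=
  (hasDerivAt_fderiv_snd hf t x).differentiableAt.hasDerivAt

theorem uncurry_partialT {f : ℝ → ℝ → ℝ} (hf : Differentiable ℝ (Function.uncurry f)) :
    Function.uncurry (partialT f) = fun p => fderiv ℝ (Function.uncurry f) p (1, 0) := by
  funext p
  exact (hasDerivAt_fderiv_fst hf p.1 p.2).deriv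

theorem uncurry_partialX {f : ℝ → ℝ → ℝ} (hf : Differentiable ℝ (Function.uncurry f)) :
    Function.uncurry (partialX f) = fun p => fderiv ℝ (Function.uncurry f) p (0, 1) := by
  funext p
  exact (hasDerivAt_fderiv_snd hf p.1 p.2).deriv

theorem contDiff_partialT {f : ℝ → ℝ → ℝ} {n : ℕ}
    (hf : ContDiff ℝ (n + 1) (Function.uncurry f)) :
    ContDiff ℝ n (Function.uncurry (partialT f)) := by
  rw [uncurry_partialT (hf.differentiable (by simp))]
  exact (hf.fderiv_right le_rfl).clm_apply contDiff_const

theorem contDiff_partialX {f : ℝ → ℝ → ℝ} {n : ℕ}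
    (hf : ContDiff ℝ (n + 1) (Function.uncurry f)) :
    ContDiff ℝ n (Function.uncurry (partialX f)) := by
  rw [uncurry_partialX (hf.differentiable (by simp))]
  exact (hf.fderiv_right le_rfl).clm_apply contDiff_const

/-- Partial derivatives of a `C²` function commute. -/
theorem partialT_partialX {f : ℝ → ℝ → ℝ} (hf : ContDiff ℝ 2 (Function.uncurry f)) (t x : ℝ) :
    partialT (partialX f) t x = partialX (partialT f) t x := by
  have hd : Differentiable ℝ (Function.uncurry f) := hf.differentiable (by simp)
  have hdd : Differentiable ℝ (fderiv ℝ (Function.uncurry f)) :=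
    (hf.fderiv_right (m := 1) (by norm_num)).differentiable (by simp)
  have hsymm := (hf.contDiffAt (x := (t, x))).isSymmSndFDerivAt (by simp)
  have hX := contDiff_partialX (n := 1) hf
  have hT := contDiff_partialT (n := 1) hf
  have h1 := (hasDerivAt_fderiv_fst (hX.differentiable (by simp)) t x).deriv
  have h2 := (hasDerivAt_fderiv_snd (hT.differentiable (by simp)) t x).deriv
  rw [uncurry_partialX hd] at h1
  rw [uncurry_partialT hd] at h2
  rw [partialT, h1, partialX, h2, fderiv_clm_apply (hdd _) (by fun_prop),
    fderiv_clm_apply (hdd _) (by fun_prop)]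
  simpa using hsymm (1, 0) (0, 1)

/-- Two functions differentiable at `a` that agree on a set with unique derivatives at `a ∈ s`
have the same derivative at `a`. -/
theorem deriv_eq_of_eqOn {f g : ℝ → ℝ} {s : Set ℝ} {a : ℝ} (hs : UniqueDiffWithinAt ℝ s a)
    (ha : a ∈ s) (hf : DifferentiableAt ℝ f a) (hg : DifferentiableAt ℝ g a) (h : EqOn f g s) :
    deriv f a = deriv g a := by
  rw [← hf.derivWithin hs, ← hg.derivWithin hs]
  exact derivWithin_congr h (h ha)

/-- Differentiation under the integral sign for jointly continuous `t`-derivatives. -/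
theorem hasDerivAt_intervalIntegral_of_continuous {F F' : ℝ → ℝ → ℝ} {a b : ℝ}
    (hF : ∀ t, Continuous (F t)) (hF' : Continuous (Function.uncurry F'))
    (h : ∀ t x, HasDerivAt (fun s => F s x) (F' t x) t) (t : ℝ) :
    HasDerivAt (fun s => ∫ x in a..b, F s x) (∫ x in a..b, F' t x) t := by
  obtain ⟨M, hM⟩ := ((isCompact_Icc (a := t - 1) (b := t + 1)).prod
    (isCompact_uIcc (a := a) (b := b))).exists_bound_of_continuousOn hF'.continuousOn
  refine (intervalIntegral.hasDerivAt_integral_of_dominated_loc_of_deriv_le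
    (bound := fun _ => M) (s := Icc (t - 1) (t + 1))
    (Icc_mem_nhds (by linarith) (by linarith))
    (Eventually.of_forall fun s => (hF s).aestronglyMeasurable)
    ((hF t).intervalIntegrable _ _)
    (hF'.comp (Continuous.prodMk_right t)).aestronglyMeasurable
    (Eventually.of_forall fun x hx s hs => ?_) intervalIntegrable_const
    (Eventually.of_forall fun x _ s _ => h s x)).2
  exact hM (s, x) ⟨hs, uIoc_subset_uIcc hx⟩

/-- Energy identity for the wave equation on `[0,1]`. -/
theorem hasDerivAt_wave_energy {f : ℝ → ℝ → ℝ} (hf : ContDiff ℝ 2 (Function.uncurry f)) {t : ℝ}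
    (hwave : ∀ x ∈ Ioo (0:ℝ) 1, partialT (partialT f) t x = partialX (partialX f) t x) :
    HasDerivAt (fun s => ∫ x in (0:ℝ)..1, (partialT f s x ^ 2 + partialX f s x ^ 2))
      (2 * (partialT f t 1 * partialX f t 1 - partialT f t 0 * partialX f t 0)) t := by
  have hX := contDiff_partialX (n := 1) hf
  have hT := contDiff_partialT (n := 1) hf
  have hXd := hX.differentiable (by simp)
  have hTd := hT.differentiable (by simp)
  have cX := hX.continuous
  have cT := hT.continuous
  have cTT := (contDiff_partialT (n := 0) (by simpa using hT)).continuous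
  have cTX := (contDiff_partialT (n := 0) (by simpa using hX)).continuous
  have cXT := (contDiff_partialX (n := 0) (by simpa using hT)).continuous
  have cXX := (contDiff_partialX (n := 0) (by simpa using hX)).continuous
  have key := hasDerivAt_intervalIntegral_of_continuous (a := 0) (b := 1)
    (F := fun s x => partialT f s x ^ 2 + partialX f s x ^ 2)
    (F' := fun s x => 2 * (partialT f s x * partialT (partialT f) s x
      + partialX f s x * partialT (partialX f) s x))
    (fun s => ((cT.comp (Continuous.prodMk_right s)).pow 2).add
      ((cX.comp (Continuous.prodMk_right s)).pow 2))
    (by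
      have := (continuous_const (y := (2:ℝ))).mul ((cT.mul cTT).add (cX.mul cTX))
      exact this)
    (fun s x => by
      refine (((hasDerivAt_partialT hTd s x).pow 2).add
        ((hasDerivAt_partialT hXd s x).pow 2)).congr_deriv ?_
      simp; ring) t
  refine key.congr_deriv ?_
  have hprod : ∀ x, HasDerivAt (fun y => 2 * (partialT f t y * partialX f t y))
      (2 * (partialX (partialT f) t x * partialX f t x
        + partialT f t x * partialX (partialX f) t x)) x := fun x =>
    ((hasDerivAt_partialX hTd t x).mul (hasDerivAt_partialX hXd t x)).const_mul 2
  have slice {g : ℝ → ℝ → ℝ} (hg : Continuous (Function.uncurry g)) : Continuous (g t) :=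
    hg.comp (Continuous.prodMk_right t)
  have hftc := integral_eq_sub_of_hasDerivAt (a := 0) (b := 1) (fun x _ => hprod x)
    ((continuous_const.mul (((slice cXT).mul (slice cX)).add
      ((slice cT).mul (slice cXX)))).intervalIntegrable _ _)
  rw [mul_sub, ← hftc]
  refine integral_congr_Ioo_of_le zero_le_one fun x hx => ?_
  rw [hwave x hx, partialT_partialX hf]
  ring

/-- Trace inequality at the left endpoint of `[0,1]`. -/
theorem sq_zero_le_integral {q q' : ℝ → ℝ} (hq : ∀ x, HasDerivAt q (q' x) x)
    (hq' : Continuous q') :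
    q 0 ^ 2 ≤ ∫ x in (0:ℝ)..1, (2 * q x ^ 2 + q' x ^ 2) := by
  have cq : Continuous q := continuous_iff_continuousAt.2 fun x => (hq x).continuousAt
  have hd : ∀ x, HasDerivAt (fun y => -((1 - y) * q y ^ 2))
      (q x ^ 2 - 2 * (1 - x) * q x * q' x) x := fun x => by
    refine (((hasDerivAt_id x).const_sub 1).mul ((hq x).pow 2)).neg.congr_deriv ?_
    simp; ring
  have hftc := integral_eq_sub_of_hasDerivAt (a := 0) (b := 1) (fun x _ => hd x)
    (Continuous.intervalIntegrable (by fun_prop) _ _)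
  have : q 0 ^ 2 = ∫ x in (0:ℝ)..1, (q x ^ 2 - 2 * (1 - x) * q x * q' x) := by
    rw [hftc]; ring
  rw [this]
  refine integral_mono_on zero_le_one (Continuous.intervalIntegrable (by fun_prop) _ _)
    (Continuous.intervalIntegrable (by fun_prop) _ _) fun x hx => ?_
  have h1 : (1 - x) ^ 2 ≤ 1 := by nlinarith [hx.1, hx.2]
  nlinarith [sq_nonneg ((1 - x) * q x + q' x), mul_le_mul_of_nonneg_right h1 (sq_nonneg (q x))]

namespace FwdObserverSol

variable {T ω γ₁ γ₂ t x : ℝ}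

theorem partialT_v1 (S : FwdObserverSol T ω γ₁ γ₂) (ht : t ∈ Icc 0 T) (hx : x ∈ Icc (0:ℝ) 1) :
    partialT S.v1 t x = S.v2 t x :=
  S.pde1 t ht x hx

theorem partialT_v2 (S : FwdObserverSol T ω γ₁ γ₂) (ht : t ∈ Icc 0 T) (hx : x ∈ Icc (0:ℝ) 1) :
    partialT S.v2 t x = partialX (partialX S.v1) t x :=
  S.pde2 t ht x hx

theorem wave_v1 (S : FwdObserverSol T ω γ₁ γ₂) (ht : t ∈ Ioo 0 T) (hx : x ∈ Icc (0:ℝ) 1) :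
    partialT (partialT S.v1) t x = partialX (partialX S.v1) t x := by
  rw [← S.partialT_v2 (Ioo_subset_Icc_self ht) hx]
  refine EventuallyEq.deriv_eq ?_
  filter_upwards [Icc_mem_nhds ht.1 ht.2] with s hs
  exact S.partialT_v1 hs hx

theorem wave_v2 (S : FwdObserverSol T ω γ₁ γ₂) (hv1 : ContDiff ℝ 3 (Function.uncurry S.v1))
    (ht : t ∈ Ioo 0 T) (hx : x ∈ Ioo (0:ℝ) 1) :
    partialT (partialT S.v2) t x = partialX (partialX S.v2) t x := by
  have hX : ContDiff ℝ 2 (Function.uncurry (partialX S.v1)) :=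
    contDiff_partialX (n := 2) (by simpa [two_add_one_eq_three] using hv1)
  have hcomm : partialT (partialX S.v1) = partialX (partialT S.v1) := by
    funext s y
    exact partialT_partialX S.smooth_v1 s y
  calc partialT (partialT S.v2) t x
      = partialT (partialX (partialX S.v1)) t x := by
        refine EventuallyEq.deriv_eq ?_
        filter_upwards [Icc_mem_nhds ht.1 ht.2] with s hs
        exact S.partialT_v2 hs (Ioo_subset_Icc_self hx)
    _ = partialX (partialX (partialT S.v1)) t x := by
        rw [partialT_partialX hX, hcomm]
    _ = partialX (partialX S.v2) t x := by
        have h : (fun y => partialT S.v1 t y) =ᶠ[𝓝 x] fun y => S.v2 t y := by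
          filter_upwards [Icc_mem_nhds hx.1 hx.2] with y hy
          exact S.partialT_v1 (Ioo_subset_Icc_self ht) hy
        exact h.deriv.deriv_eq

theorem hasDerivAt_ξ1 (S : FwdObserverSol T ω γ₁ γ₂) (ht : t ∈ Icc 0 T) :
    HasDerivAt S.ξ1 (S.ξ2 t - γ₂ * S.ξ1 t) t :=
  S.ode1 t ht ▸ (S.smooth_ξ1.differentiable one_ne_zero t).hasDerivAt

theorem hasDerivAt_ξ2 (S : FwdObserverSol T ω γ₁ γ₂) (ht : t ∈ Icc 0 T) :
    HasDerivAt S.ξ2 (-ω ^ 2 * S.ξ1 t + partialX S.v1 t 0) t :=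
  S.ode2 t ht ▸ (S.smooth_ξ2.differentiable one_ne_zero t).hasDerivAt

theorem hasDerivAt_ξ3 (S : FwdObserverSol T ω γ₁ γ₂) (ht : t ∈ Icc 0 T) :
    HasDerivAt S.ξ3 (S.ξ1 t) t :=
  S.ode3 t ht ▸ (S.smooth_ξ3.differentiable one_ne_zero t).hasDerivAt

theorem v2_zero (S : FwdObserverSol T ω γ₁ γ₂) (ht : t ∈ Ioo 0 T) :
    S.v2 t 0 = γ₁ * S.ξ2 t := by
  have htc := Ioo_subset_Icc_self ht
  have h : (fun s => S.v1 s 0) =ᶠ[𝓝 t] fun s => γ₁ * S.ξ1 s + γ₁ * γ₂ * S.ξ3 s := by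
    filter_upwards [Icc_mem_nhds ht.1 ht.2] with s hs
    exact S.bc0 s hs
  rw [← S.partialT_v1 htc (left_mem_Icc.2 zero_le_one), partialT, h.deriv_eq]
  refine (((S.hasDerivAt_ξ1 htc).const_mul γ₁).add ((S.hasDerivAt_ξ3 htc).const_mul (γ₁ * γ₂))).deriv.trans ?_
  ring

theorem partialT_v2_zero (S : FwdObserverSol T ω γ₁ γ₂) (ht : t ∈ Ioo 0 T) :
    partialT S.v2 t 0 = γ₁ * (-ω ^ 2 * S.ξ1 t + partialX S.v1 t 0) := by
  have h : (fun s => S.v2 s 0) =ᶠ[𝓝 t] fun s => γ₁ * S.ξ2 s := by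
    filter_upwards [Ioo_mem_nhds ht.1 ht.2] with s hs
    exact S.v2_zero hs
  rw [partialT, h.deriv_eq, ((S.hasDerivAt_ξ2 (Ioo_subset_Icc_self ht)).const_mul γ₁).deriv]

theorem v2_one (S : FwdObserverSol T ω γ₁ γ₂) (ht : t ∈ Ioo 0 T) : S.v2 t 1 = 0 := by
  have h : (fun s => S.v1 s 1) =ᶠ[𝓝 t] fun _ => 0 := by
    filter_upwards [Icc_mem_nhds ht.1 ht.2] with s hs
    exact S.bc1 s hs
  rw [← S.partialT_v1 (Ioo_subset_Icc_self ht) (right_mem_Icc.2 zero_le_one), partialT,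
    h.deriv_eq, deriv_const]

theorem partialT_v2_one (S : FwdObserverSol T ω γ₁ γ₂) (ht : t ∈ Ioo 0 T) :
    partialT S.v2 t 1 = 0 := by
  have h : (fun s => S.v2 s 1) =ᶠ[𝓝 t] fun _ => 0 := by
    filter_upwards [Ioo_mem_nhds ht.1 ht.2] with s hs
    exact S.v2_one hs
  rw [partialT, h.deriv_eq, deriv_const]

theorem hasDerivAt_partialX_v1_zero (S : FwdObserverSol T ω γ₁ γ₂) (ht : t ∈ Icc 0 T) :
    HasDerivAt (fun s => partialX S.v1 s 0) (partialX S.v2 t 0) t := by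
  have hX := (contDiff_partialX (n := 1) S.smooth_v1).differentiable (by simp)
  have hT := (contDiff_partialT (n := 1) S.smooth_v1).differentiable (by simp)
  refine (hasDerivAt_partialT hX t 0).congr_deriv ?_
  rw [partialT_partialX S.smooth_v1]
  exact deriv_eq_of_eqOn (uniqueDiffOn_Icc zero_lt_one 0 (left_mem_Icc.2 zero_le_one))
    (left_mem_Icc.2 zero_le_one) (hasDerivAt_partialX hT t 0).differentiableAt
    (hasDerivAt_partialX (S.smooth_v2.differentiable (by simp)) t 0).differentiableAt
    fun y hy => S.partialT_v1 ht hy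

/-- The Lyapunov functional: the second-order energy with its boundary corrections, plus `K` times
the first-order energy. -/
noncomputable def lyapunov (S : FwdObserverSol T ω γ₁ γ₂) (K t : ℝ) : ℝ :=
  (1 / 2) * (∫ x in (0:ℝ)..1, (partialT S.v2 t x ^ 2 + partialX S.v2 t x ^ 2))
    + γ₁ * ((1 / 2) * partialX S.v1 t 0 ^ 2 - ω ^ 2 * (S.ξ1 t * partialX S.v1 t 0)
      + ω ^ 2 * ((1 / 2) * S.ξ2 t ^ 2 + (1 / 2) * ω ^ 2 * S.ξ1 t ^ 2
        - γ₂ * (S.ξ1 t * S.ξ2 t)))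
    + K * ((1 / 2) * (∫ x in (0:ℝ)..1, (partialT S.v1 t x ^ 2 + partialX S.v1 t x ^ 2))
      + (1 / 2) * γ₁ * (S.ξ2 t ^ 2 + ω ^ 2 * S.ξ1 t ^ 2))

theorem hasDerivAt_lyapunov (S : FwdObserverSol T ω γ₁ γ₂)
    (hv1 : ContDiff ℝ 3 (Function.uncurry S.v1)) (K : ℝ) (ht : t ∈ Ioo 0 T) :
    HasDerivAt (S.lyapunov K)
      (γ₁ * γ₂ * ω ^ 2 * (γ₂ * (S.ξ1 t * S.ξ2 t) - S.ξ2 t ^ 2 - K * S.ξ1 t ^ 2)) t := by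
  have htc := Ioo_subset_Icc_self ht
  have h1 := S.hasDerivAt_ξ1 htc
  have h2 := S.hasDerivAt_ξ2 htc
  have hp := S.hasDerivAt_partialX_v1_zero htc
  have hE2 := hasDerivAt_wave_energy S.smooth_v2 fun x hx => S.wave_v2 hv1 ht hx
  have hE1 := hasDerivAt_wave_energy S.smooth_v1 fun x hx =>
    S.wave_v1 ht (Ioo_subset_Icc_self hx)
  rw [S.partialT_v2_one ht, S.partialT_v2_zero ht] at hE2
  rw [S.partialT_v1 htc (right_mem_Icc.2 zero_le_one),
    S.partialT_v1 htc (left_mem_Icc.2 zero_le_one), S.v2_one ht, S.v2_zero ht] at hE1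
  refine (((hE2.const_mul (1 / 2)).add
    (((((hp.pow 2).const_mul (1 / 2)).sub ((h1.mul hp).const_mul (ω ^ 2))).add
      (((((h2.pow 2).const_mul (1 / 2)).add ((h1.pow 2).const_mul ((1 / 2) * ω ^ 2))).sub
        ((h1.mul h2).const_mul γ₂)).const_mul (ω ^ 2))).const_mul γ₁)).add
    (((hE1.const_mul (1 / 2)).add
      (((h2.pow 2).add ((h1.pow 2).const_mul (ω ^ 2))).const_mul ((1 / 2) * γ₁))).const_mul
        K)).congr_deriv ?_
  simp
  ring

theorem continuous_lyapunov (S : FwdObserverSol T ω γ₁ γ₂) (K : ℝ) :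
    Continuous (S.lyapunov K) := by
  have henergy {f : ℝ → ℝ → ℝ} (hf : ContDiff ℝ 2 (Function.uncurry f)) :
      Continuous fun s => ∫ x in (0:ℝ)..1, (partialT f s x ^ 2 + partialX f s x ^ 2) := by
    refine intervalIntegral.continuous_parametric_intervalIntegral_of_continuous' ?_ _ _
    exact ((contDiff_partialT (n := 1) hf).continuous.pow 2).add
      ((contDiff_partialX (n := 1) hf).continuous.pow 2)
  have hp : Continuous fun s => partialX S.v1 s 0 :=
    (contDiff_partialX (n := 1) S.smooth_v1).continuous.comp (Continuous.prodMk_left 0)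
  have h1 := S.smooth_ξ1.continuous
  have h2 := S.smooth_ξ2.continuous
  have hE1 := henergy S.smooth_v1
  have hE2 := henergy S.smooth_v2
  unfold lyapunov
  fun_prop

theorem lyapunov_add_integral_le (S : FwdObserverSol T ω γ₁ γ₂)
    (hv1 : ContDiff ℝ 3 (Function.uncurry S.v1)) (hγ₁ : 0 < γ₁) (hγ₂ : 0 < γ₂) (hT : 0 < T)
    {K : ℝ} (hK : γ₂ ^ 2 ≤ K) :
    S.lyapunov K T + (1 / 2) * γ₁ * γ₂ * ω ^ 2 * (∫ s in (0:ℝ)..T, S.ξ2 s ^ 2)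
      ≤ S.lyapunov K 0 := by
  have c2 : Continuous fun s => S.ξ2 s ^ 2 := S.smooth_ξ2.continuous.pow 2
  have hI : ∀ t, HasDerivAt (fun t => ∫ s in (0:ℝ)..t, S.ξ2 s ^ 2) (S.ξ2 t ^ 2) t := fun t =>
    c2.integral_hasStrictDerivAt 0 t |>.hasDerivAt
  have hd : ∀ t ∈ Ioo 0 T, HasDerivAt (fun t => S.lyapunov K t
      + (1 / 2) * γ₁ * γ₂ * ω ^ 2 * (∫ s in (0:ℝ)..t, S.ξ2 s ^ 2)) _ t := fun t ht =>
    (S.hasDerivAt_lyapunov hv1 K ht).add ((hI t).const_mul _)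
  have hanti : AntitoneOn (fun t => S.lyapunov K t
      + (1 / 2) * γ₁ * γ₂ * ω ^ 2 * (∫ s in (0:ℝ)..t, S.ξ2 s ^ 2)) (Icc 0 T) := by
    refine antitoneOn_of_deriv_nonpos (convex_Icc 0 T) ?_ ?_ ?_
    · have hIc : Continuous fun t => ∫ s in (0:ℝ)..t, S.ξ2 s ^ 2 :=
        continuous_iff_continuousAt.2 fun t => (hI t).continuousAt
      exact ((S.continuous_lyapunov K).add (continuous_const.mul hIc)).continuousOn
    · rw [interior_Icc]
      exact fun t ht => (hd t ht).differentiableAt.differentiableWithinAt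
    · rw [interior_Icc]
      intro t ht
      rw [(hd t ht).deriv]
      have hc : 0 ≤ γ₁ * γ₂ * ω ^ 2 := by positivity
      have hq : γ₂ * (S.ξ1 t * S.ξ2 t) - (1 / 2) * S.ξ2 t ^ 2 - K * S.ξ1 t ^ 2 ≤ 0 := by
        nlinarith [sq_nonneg (γ₂ * S.ξ1 t - S.ξ2 t), sq_nonneg (γ₂ * S.ξ1 t),
          mul_le_mul_of_nonneg_right hK (sq_nonneg (S.ξ1 t))]
      linarith [mul_nonpos_of_nonneg_of_nonpos hc hq]
  simpa using hanti (left_mem_Icc.2 hT.le) (right_mem_Icc.2 hT.le) hT.le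

end FwdObserverSol

/-- The indefinite boundary terms of the Lyapunov functional at the final time are absorbed by a
multiple of the first-order energy. -/
theorem lyapunov_terminal_bound (ω γ₂ a b p : ℝ) (hγ₂ : 0 ≤ γ₂) :
    (1 / 2) * ω ^ 4 * a ^ 2 + (1 / 4) * p ^ 2 + ω ^ 2 * b ^ 2
      ≤ (1 / 2) * p ^ 2 - ω ^ 2 * (a * p)
        + ω ^ 2 * ((1 / 2) * b ^ 2 + (1 / 2) * ω ^ 2 * a ^ 2 - γ₂ * (a * b))
        + (γ₂ ^ 2 + 3 * ω ^ 2 + γ₂ + γ₂ * ω ^ 2) * ((1 / 2) * (b ^ 2 + ω ^ 2 * a ^ 2)) := by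
  have h1 : 0 ≤ ((1 / 2) * p - ω ^ 2 * a) ^ 2 := sq_nonneg _
  have h2 : 0 ≤ (1 / 2) * γ₂ * ω ^ 2 * (a - b) ^ 2 := by positivity
  have h3 : 0 ≤ (1 / 2) * (γ₂ ^ 2 + γ₂) * b ^ 2 + (1 / 2) * γ₂ ^ 2 * ω ^ 2 * a ^ 2
      + (1 / 2) * ω ^ 4 * a ^ 2 + ω ^ 2 * b ^ 2 + (1 / 2) * γ₂ * ω ^ 4 * a ^ 2 := by positivity
  linarith

/-- The boundary terms of the Lyapunov functional at the initial time. -/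
theorem lyapunov_initial_bound (ω γ₂ a b : ℝ) {p A : ℝ} (hγ₂ : 0 ≤ γ₂) (hp : p ^ 2 ≤ 2 * A) :
    (1 / 2) * p ^ 2 - ω ^ 2 * (a * p)
        + ω ^ 2 * ((1 / 2) * b ^ 2 + (1 / 2) * ω ^ 2 * a ^ 2 - γ₂ * (a * b))
      ≤ (1 + ω ^ 2) * A + (ω ^ 2 + ω ^ 4 + γ₂ * ω ^ 2) * (a ^ 2 + b ^ 2) := by
  have h1 : 0 ≤ (1 / 2) * ω ^ 2 * (a + p) ^ 2 := by positivity
  have h2 : 0 ≤ (1 / 2) * γ₂ * ω ^ 2 * (a + b) ^ 2 := by positivity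
  have h3 : 0 ≤ (1 + ω ^ 2) * (2 * A - p ^ 2) :=
    mul_nonneg (by positivity) (sub_nonneg.2 hp)
  have h4 : 0 ≤ (1 / 2) * ω ^ 2 * (a ^ 2 + b ^ 2) + (1 / 2) * ω ^ 4 * (a ^ 2 + b ^ 2 + b ^ 2)
      + (1 / 2) * γ₂ * ω ^ 2 * (a ^ 2 + b ^ 2) := by positivity
  linarith

/-- second energy estimate of Proposition 3: there is a constant
`C > 0` depending only on `ω, γ₁, γ₂` (not on `T`) bounding the second-order energy
at time `T` by the `H² × H¹` norm of the initial data plus `ξ₁(0)² + ξ₂(0)²`. -/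
theorem forward_second_energy_estimate
    (ω γ₁ γ₂ : ℝ) (hγ₁ : 0 < γ₁) (hγ₂ : 0 < γ₂) :
    ∃ C > 0, ∀ T : ℝ, 0 < T → ∀ S : FwdObserverSol T ω γ₁ γ₂,
      ContDiff ℝ 3 (Function.uncurry S.v1) →
      ContDiff ℝ 3 (Function.uncurry S.v2) →
      (1 / 2) * ((∫ x in (0:ℝ)..1, (deriv (fun s => S.v2 s x) T) ^ 2)
          + (∫ x in (0:ℝ)..1, (deriv (fun y => S.v2 T y) x) ^ 2)
          + γ₁ * ω ^ 4 * (S.ξ1 T) ^ 2)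
        + (1 / 4) * γ₁ * (deriv (fun y => S.v1 T y) 0) ^ 2
        + (1 / 2) * γ₁ * γ₂ * ω ^ 2 * (∫ s in (0:ℝ)..T, (S.ξ2 s) ^ 2)
        + γ₁ * ω ^ 2 * (S.ξ2 T) ^ 2
      ≤ C * ((∫ x in (0:ℝ)..1,
            ((S.v1 0 x) ^ 2 + (deriv (fun y => S.v1 0 y) x) ^ 2
              + (deriv (deriv (fun y => S.v1 0 y)) x) ^ 2))
          + (∫ x in (0:ℝ)..1,
            ((S.v2 0 x) ^ 2 + (deriv (fun y => S.v2 0 y) x) ^ 2))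
          + (S.ξ1 0) ^ 2 + (S.ξ2 0) ^ 2) := by
  set K := γ₂ ^ 2 + 3 * ω ^ 2 + γ₂ + γ₂ * ω ^ 2 with hKdef
  have hK : 0 < K := by positivity
  refine ⟨1 + γ₁ + γ₁ * ω ^ 2 + γ₁ * ω ^ 4 + γ₁ * ω ^ 2 * γ₂ + K + K * γ₁ * (1 + ω ^ 2),
    by positivity, fun T hT S hv1 _ => ?_⟩
  have hdecay := S.lyapunov_add_integral_le hv1 hγ₁ hγ₂ hT (K := K)
    (by rw [hKdef]; nlinarith [sq_nonneg ω, mul_nonneg hγ₂.le (sq_nonneg ω)])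
  have slice {g : ℝ → ℝ → ℝ} (hg : Continuous (Function.uncurry g)) (t : ℝ) :
      Continuous (g t) := hg.comp (Continuous.prodMk_right t)
  have cT1 := slice (contDiff_partialT (n := 1) S.smooth_v1).continuous
  have cX1 := slice (contDiff_partialX (n := 1) S.smooth_v1).continuous
  have cT2 := slice (contDiff_partialT (n := 1) S.smooth_v2).continuous
  have cX2 := slice (contDiff_partialX (n := 1) S.smooth_v2).continuous
  have c1 := slice S.smooth_v1.continuous 0
  have c2 := slice S.smooth_v2.continuous 0
  have hX1 := contDiff_partialX (n := 1) S.smooth_v1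
  have cXX1 := slice (contDiff_partialX (n := 0) (by simpa using hX1)).continuous
  have hsplit : (∫ x in (0:ℝ)..1, (partialT S.v2 T x ^ 2 + partialX S.v2 T x ^ 2))
      = (∫ x in (0:ℝ)..1, partialT S.v2 T x ^ 2) + ∫ x in (0:ℝ)..1, partialX S.v2 T x ^ 2 :=
    integral_add (((cT2 T).pow 2).intervalIntegrable _ _) (((cX2 T).pow 2).intervalIntegrable _ _)
  change (1 / 2) * ((∫ x in (0:ℝ)..1, partialT S.v2 T x ^ 2)
          + (∫ x in (0:ℝ)..1, partialX S.v2 T x ^ 2)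
          + γ₁ * ω ^ 4 * (S.ξ1 T) ^ 2)
        + (1 / 4) * γ₁ * (partialX S.v1 T 0) ^ 2
        + (1 / 2) * γ₁ * γ₂ * ω ^ 2 * (∫ s in (0:ℝ)..T, (S.ξ2 s) ^ 2)
        + γ₁ * ω ^ 2 * (S.ξ2 T) ^ 2
      ≤ _ * ((∫ x in (0:ℝ)..1,
            ((S.v1 0 x) ^ 2 + partialX S.v1 0 x ^ 2 + partialX (partialX S.v1) 0 x ^ 2))
          + (∫ x in (0:ℝ)..1, ((S.v2 0 x) ^ 2 + partialX S.v2 0 x ^ 2))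
          + (S.ξ1 0) ^ 2 + (S.ξ2 0) ^ 2)
  set A := ∫ x in (0:ℝ)..1,
    ((S.v1 0 x) ^ 2 + partialX S.v1 0 x ^ 2 + partialX (partialX S.v1) 0 x ^ 2) with hA
  set B := ∫ x in (0:ℝ)..1, ((S.v2 0 x) ^ 2 + partialX S.v2 0 x ^ 2) with hB
  have iA : IntervalIntegrable (fun x => (S.v1 0 x) ^ 2 + partialX S.v1 0 x ^ 2
      + partialX (partialX S.v1) 0 x ^ 2) volume 0 1 :=
    (((c1.pow 2).add ((cX1 0).pow 2)).add ((cXX1 0).pow 2)).intervalIntegrable _ _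
  have iB : IntervalIntegrable (fun x => (S.v2 0 x) ^ 2 + partialX S.v2 0 x ^ 2) volume 0 1 :=
    ((c2.pow 2).add ((cX2 0).pow 2)).intervalIntegrable _ _
  have hA0 : 0 ≤ A := integral_nonneg zero_le_one fun x _ => by positivity
  have hB0 : 0 ≤ B := integral_nonneg zero_le_one fun x _ => by positivity
  have hzero : (0:ℝ) ∈ Icc 0 T := left_mem_Icc.2 hT.le
  have hE2 : (∫ x in (0:ℝ)..1, (partialT S.v2 0 x ^ 2 + partialX S.v2 0 x ^ 2)) ≤ A + B := by
    rw [hA, hB, ← integral_add iA iB]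
    refine integral_mono_on zero_le_one
      ((((cT2 0).pow 2).add ((cX2 0).pow 2)).intervalIntegrable _ _) (iA.add iB) fun x hx => ?_
    rw [S.partialT_v2 hzero hx]
    nlinarith [sq_nonneg (S.v1 0 x), sq_nonneg (partialX S.v1 0 x), sq_nonneg (S.v2 0 x)]
  have hE1 : (∫ x in (0:ℝ)..1, (partialT S.v1 0 x ^ 2 + partialX S.v1 0 x ^ 2)) ≤ A + B := by
    rw [hA, hB, ← integral_add iA iB]
    refine integral_mono_on zero_le_one
      ((((cT1 0).pow 2).add ((cX1 0).pow 2)).intervalIntegrable _ _) (iA.add iB) fun x hx => ?_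
    rw [S.partialT_v1 hzero hx]
    nlinarith [sq_nonneg (S.v1 0 x), sq_nonneg (partialX (partialX S.v1) 0 x),
      sq_nonneg (partialX S.v2 0 x)]
  have htrace : partialX S.v1 0 0 ^ 2 ≤ 2 * A := by
    refine (sq_zero_le_integral (fun x => hasDerivAt_partialX (hX1.differentiable (by simp)) 0 x)
      (cXX1 0)).trans ?_
    rw [hA, ← intervalIntegral.integral_const_mul]
    refine integral_mono_on zero_le_one
      (((((cX1 0).pow 2).const_mul 2).add ((cXX1 0).pow 2)).intervalIntegrable _ _)
      (iA.const_mul 2) fun x _ => ?_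
    nlinarith [sq_nonneg (S.v1 0 x), sq_nonneg (partialX (partialX S.v1) 0 x)]
  have hE1T : 0 ≤ ∫ x in (0:ℝ)..1, (partialT S.v1 T x ^ 2 + partialX S.v1 T x ^ 2) :=
    integral_nonneg zero_le_one fun x _ => by positivity
  unfold FwdObserverSol.lyapunov at hdecay
  rw [hsplit] at hdecay
  have hfinal := lyapunov_terminal_bound ω γ₂ (S.ξ1 T) (S.ξ2 T) (partialX S.v1 T 0) hγ₂.le
  have hinit := lyapunov_initial_bound ω γ₂ (S.ξ1 0) (S.ξ2 0) hγ₂.le htrace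
  have hKE := mul_nonneg hK.le hE1T
  have hKE0 := mul_le_mul_of_nonneg_left hE1 hK.le
  have hterm := mul_le_mul_of_nonneg_left hfinal hγ₁.le
  have hstart := mul_le_mul_of_nonneg_left hinit hγ₁.le
  rw [← hKdef] at hterm
  have hrest : 0 ≤ (1 / 2 + K / 2) * (A + B) + (γ₁ + γ₁ * ω ^ 2) * B
      + (γ₁ * ω ^ 4 + γ₁ * ω ^ 2 * γ₂ + K * γ₁ * (1 + ω ^ 2)) * (A + B)
      + (1 + γ₁ + K) * (S.ξ1 0 ^ 2 + S.ξ2 0 ^ 2)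
      + K * γ₁ * (S.ξ1 0 ^ 2 + ω ^ 2 * S.ξ2 0 ^ 2)
      + (1 / 2) * K * γ₁ * (S.ξ2 0 ^ 2 + ω ^ 2 * S.ξ1 0 ^ 2) := by positivity
  linarith
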